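/- Let A be a finite alphabet with |A| ≥ 2. The diagonal action of G* on the product ∏_{a∈A} Ω^a is minimal: every G*-orbit is dense in ∏_{a∈A} Ω^a. -/

import Mathlib

/-!
Every `G*`-orbit is dense because prefixes can be corrected one symbol `a` at a time by marker
automorphisms.

Fix `a`, a length `M ≥ 1` and two words `u`, `v` of length `M` not starting with `a`. The swap map
exchanges `u` and `v` wherever they are preceded by `a^M` and followed by `a^R`. If either `R = M`,
or `R ≤ M` and neither word ends in `a`, then distinct occurrences are at distance at least `2M`
(`MarkerOcc.spacing`), so a swap never touches the context or the target of another occurrence.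
Hence the swap is an involutive automorphism of `A^ℤ` (`markerSwap_symm`, `markerHomeo`).

The swap maps each `φ(Ω^b)` to itself. It changes nothing in the first `M` symbols of a point
of `Ω^b` for `b ≠ a`, since an occurrence needs `a^M` on its left. For `x, w ∈ Ω^a`, with `u` taken
from `x` and `v` from `w`, it sends `x` to a point with the same prefix as `w`
(`exists_correction`): if `x` is constantly `a` beyond the prefix, the context `a^M` is available
on the right, and otherwise `u` can be chosen to end in a symbol other than `a`. Composing these corrections
over `a ∈ A` sends the given tuple into any prescribed product of cylinders.
-/

open Filter MeasureTheory

/-- The group of self-homeomorphisms of a topological space,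
with `(f * g) x = f (g x)`. -/
instance homeoGroup (X : Type*) [TopologicalSpace X] : Group (X ≃ₜ X) where
  mul f g := g.trans f
  one := Homeomorph.refl X
  inv := Homeomorph.symm
  mul_assoc f g h := Homeomorph.ext fun _ => rfl
  one_mul f := Homeomorph.ext fun _ => rfl
  mul_one f := Homeomorph.ext fun _ => rfl
  inv_mul_cancel f := Homeomorph.ext f.symm_apply_apply

/-- The left shift `(σ x) m = x (m+1)` on `A^ℤ`, as a homeomorphism. -/
def shiftHomeo (A : Type*) [TopologicalSpace A] : (ℤ → A) ≃ₜ (ℤ → A) where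
  toFun x := fun m => x (m + 1)
  invFun x := fun m => x (m - 1)
  left_inv x := funext fun m => by simp
  right_inv x := funext fun m => by simp
  continuous_toFun := continuous_pi fun m => continuous_apply (m + 1)
  continuous_invFun := continuous_pi fun m => continuous_apply (m - 1)

/-- `Aut(A^ℤ)`: the group of homeomorphisms of `A^ℤ` commuting with the shift. -/
def ShiftAut (A : Type*) [TopologicalSpace A] : Subgroup ((ℤ → A) ≃ₜ (ℤ → A)) :=
  Subgroup.centralizer {shiftHomeo A}

/-- `Ω`: the space of one-sided configurations whose zeroth symbol differs from
the first. -/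
def OmegaSet (A : Type*) : Set (ℕ → A) := {x | x 0 ≠ x 1}

/-- `Ω^a`: the elements of `Ω` whose zeroth symbol is `a`. -/
def OmegaA (A : Type*) (a : A) : Set (ℕ → A) := {x | x 0 = a ∧ x 0 ≠ x 1}

/-- `φ : Ω → A^ℤ_*` prepends an infinite constant `x 0` prefix to `x`. -/
def phiMap (A : Type*) (x : ℕ → A) : ℤ → A :=
  fun m => if m ≤ 0 then x 0 else x m.toNat

/-- `ℓ(y)`: the last coordinate of the constant prefix of `y ∈ A^ℤ_*`. -/
noncomputable def ellVal (A : Type*) (y : ℤ → A) : ℤ :=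
  sInf {m : ℤ | y m ≠ y (m + 1)}

/-- The action of `Aut(A^ℤ)` on `Ω`: `g • x = ψ (g (φ x))`, where
`ψ(y) = φ⁻¹(σ^{ℓ(y)} y)`, i.e. `(g • x) n = (g (φ x)) (ℓ (g (φ x)) + n)`. -/
noncomputable def omegaAct (A : Type*) [TopologicalSpace A]
    (g : (ℤ → A) ≃ₜ (ℤ → A)) (x : ℕ → A) : ℕ → A :=
  fun n => g (phiMap A x) (ellVal A (g (phiMap A x)) + n)

/-- `G* = ∩_{a ∈ A} G^a`, where `G^a` is the set of automorphisms that
preserve `Ω^a` under the action on `Ω`. -/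
def Gstar (A : Type*) [TopologicalSpace A] : Set ((ℤ → A) ≃ₜ (ℤ → A)) :=
  {g | g ∈ ShiftAut A ∧ ∀ a : A, omegaAct A g '' OmegaA A a = OmegaA A a}

/-- The product `∏_{a ∈ A} Ω^a`. -/
abbrev ProdOmega (A : Type*) : Type _ := {z : A → ℕ → A // ∀ a : A, z a ∈ OmegaA A a}

/-- The diagonal action of `G*` on `∏_{a ∈ A} Ω^a`. -/
noncomputable def diagAct (A : Type*) [TopologicalSpace A]
    (g : (ℤ → A) ≃ₜ (ℤ → A)) (hg : g ∈ Gstar A) (z : ProdOmega A) : ProdOmega A :=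
  ⟨fun a => omegaAct A g (z.1 a), fun a => by
    have h := hg.2 a
    rw [← h]
    exact Set.mem_image_of_mem _ (z.2 a)⟩

/-! ### Marker swaps -/

/-- The word `t b` of length `M` occurs in `y` at position `i`, preceded by `a^M` and followed by
`a^R`. Words are encoded as functions `ℕ → A`, of which only the first `M` values matter. -/
def MarkerOcc {A : Type*} (a : A) (M R : ℕ) (t : Bool → ℕ → A) (y : ℤ → A) (i : ℤ) (b : Bool) :
    Prop :=
  (∀ m : ℤ, i - M ≤ m → m < i → y m = a) ∧ (∀ k : ℕ, k < M → y (i + k) = t b k) ∧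
    (∀ m : ℤ, i + M ≤ m → m < i + M + R → y m = a)

/-- The conditions on the two words and the right context under which occurrences are isolated. -/
structure MarkerData {A : Type*} (a : A) (M R : ℕ) (t : Bool → ℕ → A) : Prop where
  pos : 0 < M
  le : R ≤ M
  head : ∀ b, t b 0 ≠ a
  last : R = M ∨ ∀ b, t b (M - 1) ≠ a

/-- `y'` arises from `y` by exchanging the two words at all their occurrences. -/
def MarkerRel {A : Type*} (a : A) (M R : ℕ) (t : Bool → ℕ → A) (y y' : ℤ → A) : Prop :=
  (∀ i b, MarkerOcc a M R t y i b → ∀ k : ℕ, k < M → y' (i + k) = t (!b) k) ∧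
    (∀ m : ℤ, (∀ i b, MarkerOcc a M R t y i b → ¬ (i ≤ m ∧ m < i + M)) → y' m = y m)

open Classical in
/-- The function exchanging the two words at all their occurrences. -/
noncomputable def markerSwap {A : Type*} (a : A) (M R : ℕ) (t : Bool → ℕ → A) (y : ℤ → A) :
    ℤ → A :=
  fun m => if h : ∃ p : ℤ × Bool, MarkerOcc a M R t y p.1 p.2 ∧ p.1 ≤ m ∧ m < p.1 + M then
    t (!h.choose.2) (m - h.choose.1).toNat else y m

section Marker

variable {A : Type*} {a : A} {M R : ℕ} {t : Bool → ℕ → A}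

theorem MarkerOcc.ne (d : MarkerData a M R t) {y : ℤ → A} {i : ℤ} {b : Bool}
    (h : MarkerOcc a M R t y i b) : y i ≠ a := by
  have h1 := h.2.1 0 d.pos
  simp only [Nat.cast_zero, add_zero] at h1
  rw [h1]
  exact d.head b

/-- Distinct occurrences are so far apart that the target of one meets neither the target nor
the contexts of the other. -/
theorem MarkerOcc.spacing (d : MarkerData a M R t) {y : ℤ → A} {i j : ℤ} {b c : Bool}
    (hi : MarkerOcc a M R t y i b) (hj : MarkerOcc a M R t y j c) (hij : i < j) :
    i + M + M ≤ j := by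
  have hpos := d.pos
  have h1 : i < j - M := by
    by_contra hcon
    exact hi.ne d (hj.1 i (by omega) hij)
  by_contra hlt
  rcases d.last with hR | hl
  · exact hj.ne d (hi.2.2 j (by omega) (by omega))
  · have h2 := hi.2.1 (M - 1) (by omega)
    have h3 := hj.1 (i + (M - 1 : ℕ)) (by omega) (by omega)
    exact hl b (h2.symm.trans h3)

theorem markerRel_markerSwap (d : MarkerData a M R t) (y : ℤ → A) :
    MarkerRel a M R t y (markerSwap a M R t y) := by
  constructor
  · intro i b hb k hk
    have h : ∃ p : ℤ × Bool, MarkerOcc a M R t y p.1 p.2 ∧ p.1 ≤ i + k ∧ i + k < p.1 + M :=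
      ⟨(i, b), hb, by simp, by simpa using hk⟩
    unfold markerSwap
    rw [dif_pos h]
    obtain ⟨hc, h1, h2⟩ := h.choose_spec
    generalize h.choose = p at hc h1 h2
    obtain ⟨j, c⟩ := p
    simp only at hc h1 h2 ⊢
    have hj : j = i := by
      rcases lt_trichotomy j i with hlt | heq | hgt
      · have := hc.spacing d hb hlt
        omega
      · exact heq
      · have := hb.spacing d hc hgt
        omega
    subst hj
    have e : (j + (k : ℤ) - j).toNat = k := by omega
    rw [e]
    have hbc : t b k = t c k := (hb.2.1 k hk).symm.trans (hc.2.1 k hk)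
    -- If both words occur at `j`, they coincide, so the choice of `c` does not matter.
    cases b <;> cases c <;> simp_all
  · intro m hm
    unfold markerSwap
    rw [dif_neg]
    rintro ⟨p, hp, hpm⟩
    exact hm _ _ hp hpm

theorem MarkerRel.unique {y y' y'' : ℤ → A} (h : MarkerRel a M R t y y')
    (h' : MarkerRel a M R t y y'') : y' = y'' := by
  funext m
  by_cases hm : ∃ i b, MarkerOcc a M R t y i b ∧ (i ≤ m ∧ m < i + M)
  · obtain ⟨i, b, hb, h1, h2⟩ := hm
    have e : m = i + ((m - i).toNat : ℕ) := by omega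
    rw [e, h.1 i b hb _ (by omega), h'.1 i b hb _ (by omega)]
  · push Not at hm
    have hm' : ∀ i b, MarkerOcc a M R t y i b → ¬ (i ≤ m ∧ m < i + M) :=
      fun i b hb hc => absurd hc.2 (not_lt.mpr (hm i b hb hc.1))
    rw [h.2 m hm', h'.2 m hm']

theorem MarkerRel.occ (d : MarkerData a M R t) {y y' : ℤ → A} (h : MarkerRel a M R t y y')
    {i : ℤ} {b : Bool} (hb : MarkerOcc a M R t y i b) : MarkerOcc a M R t y' i (!b) := by
  have hle := d.le
  refine ⟨fun m h1 h2 => ?_, h.1 i b hb, fun m h1 h2 => ?_⟩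
  · rw [h.2 m, hb.1 m h1 h2]
    rintro j c hc ⟨h3, h4⟩
    have := hc.spacing d hb (by omega)
    omega
  · rw [h.2 m, hb.2.2 m h1 h2]
    rintro j c hc ⟨h3, h4⟩
    have := hb.spacing d hc (by omega)
    omega

theorem MarkerRel.occ_symm (d : MarkerData a M R t) {y y' : ℤ → A} (h : MarkerRel a M R t y y')
    {i : ℤ} {b : Bool} (hb : MarkerOcc a M R t y' i b) : MarkerOcc a M R t y i (!b) := by
  have hle := d.le
  have hpos := d.pos
  by_cases hex : ∃ c, MarkerOcc a M R t y i c
  · obtain ⟨c, hc⟩ := hex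
    by_cases hcb : c = !b
    · exact hcb ▸ hc
    · have hcb' : c = b := by cases b <;> cases c <;> simp_all
      subst hcb'
      refine ⟨hc.1, fun k hk => ?_, hc.2.2⟩
      rw [hc.2.1 k hk, ← hb.2.1 k hk, h.1 i c hc k hk]
    -- Otherwise the two configurations agree on the whole pattern, since any other occurrence in
    -- the first is also one in the second and hence far from `i`.
  · have key : ∀ m : ℤ, i - M ≤ m → m < i + M + R → y' m = y m := by
      intro m h1 h2
      apply h.2
      rintro j c hc ⟨h3, h4⟩
      have hc' := h.occ d hc
      rcases lt_trichotomy j i with hlt | heq | hgt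
      · have := hc'.spacing d hb hlt
        omega
      · exact hex ⟨c, heq ▸ hc⟩
      · have := hb.spacing d hc' hgt
        omega
    refine absurd ⟨b, fun m h1 h2 => ?_, fun k hk => ?_, fun m h1 h2 => ?_⟩ hex
    · rw [← key m h1 (by omega), hb.1 m h1 h2]
    · rw [← key _ (by omega) (by omega), hb.2.1 k hk]
    · rw [← key m (by omega) h2, hb.2.2 m h1 h2]

theorem MarkerRel.symm (d : MarkerData a M R t) {y y' : ℤ → A} (h : MarkerRel a M R t y y') :
    MarkerRel a M R t y' y := by
  refine ⟨fun i b hb => (h.occ_symm d hb).2.1, fun m hm => (h.2 m ?_).symm⟩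
  exact fun i b hb => hm i (!b) (h.occ d hb)

theorem markerSwap_symm (d : MarkerData a M R t) (y : ℤ → A) :
    markerSwap a M R t (markerSwap a M R t y) = y :=
  (markerRel_markerSwap d _).unique ((markerRel_markerSwap d y).symm d)

theorem markerOcc_shift {y : ℤ → A} {i : ℤ} {b : Bool} :
    MarkerOcc a M R t (fun m => y (m + 1)) i b ↔ MarkerOcc a M R t y (i + 1) b := by
  constructor
  · rintro ⟨h1, h2, h3⟩
    refine ⟨fun m _ _ => ?_, fun k hk => ?_, fun m _ _ => ?_⟩
    · simpa using h1 (m - 1) (by omega) (by omega)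
    · simpa [add_right_comm] using h2 k hk
    · simpa using h3 (m - 1) (by omega) (by omega)
  · rintro ⟨h1, h2, h3⟩
    refine ⟨fun m _ _ => ?_, fun k hk => ?_, fun m _ _ => ?_⟩
    · exact h1 (m + 1) (by omega) (by omega)
    · simpa [add_right_comm] using h2 k hk
    · exact h3 (m + 1) (by omega) (by omega)

theorem markerSwap_shift (d : MarkerData a M R t) (y : ℤ → A) :
    markerSwap a M R t (fun m => y (m + 1)) = fun m => markerSwap a M R t y (m + 1) := by
  have h := markerRel_markerSwap d y
  refine (markerRel_markerSwap d _).unique ⟨fun i b hb k hk => ?_, fun m hm => ?_⟩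
  · have := h.1 _ _ (markerOcc_shift.1 hb) k hk
    simpa [add_right_comm] using this
  · refine h.2 (m + 1) fun i b hb hc => ?_
    refine hm (i - 1) b (markerOcc_shift.2 (by simpa using hb)) ⟨by omega, by omega⟩

theorem MarkerOcc.congr {y z : ℤ → A} {i : ℤ} {b : Bool} (hb : MarkerOcc a M R t y i b)
    (hyz : ∀ m, i - M ≤ m → m < i + M + R → z m = y m) : MarkerOcc a M R t z i b := by
  refine ⟨fun m h1 h2 => ?_, fun k hk => ?_, fun m h1 h2 => ?_⟩
  · rw [hyz m h1 (by omega), hb.1 m h1 h2]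
  · rw [hyz _ (by omega) (by omega), hb.2.1 k hk]
  · rw [hyz m (by omega) h2, hb.2.2 m h1 h2]

/-- The swap is a sliding block code of radius `3M`. -/
theorem markerSwap_local (d : MarkerData a M R t) {y z : ℤ → A} {m : ℤ}
    (hyz : ∀ k ∈ Finset.Icc (m - 3 * M) (m + 3 * M), z k = y k) :
    markerSwap a M R t z m = markerSwap a M R t y m := by
  have hle := d.le
  have hy := markerRel_markerSwap d y
  have hz := markerRel_markerSwap d z
  simp only [Finset.mem_Icc] at hyz
  by_cases hm : ∃ i b, MarkerOcc a M R t y i b ∧ (i ≤ m ∧ m < i + M)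
  · obtain ⟨i, b, hb, h1, h2⟩ := hm
    have hb' : MarkerOcc a M R t z i b :=
      hb.congr fun k h3 h4 => hyz k ⟨by omega, by omega⟩
    have e : m = i + ((m - i).toNat : ℕ) := by omega
    rw [e, hy.1 i b hb _ (by omega), hz.1 i b hb' _ (by omega)]
  · rw [hy.2 m fun i b hb hc => hm ⟨i, b, hb, hc⟩, hz.2 m, hyz m ⟨by omega, by omega⟩]
    rintro i b hb ⟨h1, h2⟩
    refine hm ⟨i, b, hb.congr fun k h3 h4 => (hyz k ⟨by omega, by omega⟩).symm, h1, h2⟩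

theorem continuous_markerSwap [TopologicalSpace A] [DiscreteTopology A]
    (d : MarkerData a M R t) : Continuous (markerSwap a M R t) := by
  refine continuous_pi fun m => continuous_iff_continuousAt.2 fun y => ?_
  refine tendsto_nhds_of_eventually_eq ?_
  have : ∀ᶠ z : ℤ → A in nhds y, ∀ k ∈ Finset.Icc (m - 3 * M) (m + 3 * M), z k = y k := by
    rw [Filter.eventually_all_finset]
    intro k _
    have hc : Tendsto (fun z : ℤ → A => z k) (nhds y) (nhds (y k)) :=
      (continuous_apply k).continuousAt
    rw [nhds_discrete A] at hc
    exact tendsto_pure.1 hc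
  filter_upwards [this] with z hz
  exact markerSwap_local d hz

/-- The swap as a homeomorphism of `A^ℤ`. -/
noncomputable def markerHomeo [TopologicalSpace A] [DiscreteTopology A]
    (d : MarkerData a M R t) : (ℤ → A) ≃ₜ (ℤ → A) where
  toFun := markerSwap a M R t
  invFun := markerSwap a M R t
  left_inv := markerSwap_symm d
  right_inv := markerSwap_symm d
  continuous_toFun := continuous_markerSwap d
  continuous_invFun := continuous_markerSwap d

end Marker

/-! ### Automorphisms preserving the sets `φ(Ω^b)` -/

/-- Automorphisms that map each `φ(Ω^b)` onto itself. They lie in `G*`, and no recentring by `ℓ`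
is needed to compute their action. -/
def PhiPreserving (A : Type*) [TopologicalSpace A] (g : (ℤ → A) ≃ₜ (ℤ → A)) : Prop :=
  g ∈ ShiftAut A ∧ ∀ b, ∀ x ∈ OmegaA A b,
    (∃ x' ∈ OmegaA A b, g (phiMap A x) = phiMap A x') ∧
    (∃ x' ∈ OmegaA A b, g (phiMap A x') = phiMap A x)

section Phi

variable {A : Type*}

theorem phiMap_natCast (x : ℕ → A) (n : ℕ) : phiMap A x n = x n := by
  unfold phiMap
  split_ifs with h
  · have : n = 0 := by omega
    rw [this]
  · simp

theorem phiMap_nonpos (x : ℕ → A) {m : ℤ} (hm : m ≤ 0) : phiMap A x m = x 0 := if_pos hm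

theorem ellVal_phiMap {b : A} {x : ℕ → A} (hx : x ∈ OmegaA A b) : ellVal A (phiMap A x) = 0 := by
  have h : IsLeast {m : ℤ | phiMap A x m ≠ phiMap A x (m + 1)} 0 := by
    constructor
    · have h1 := phiMap_natCast x 1
      have h0 := phiMap_natCast x 0
      simp only [Nat.cast_one, Nat.cast_zero] at h0 h1
      simpa [h0, h1] using hx.2
    · intro m hm
      by_contra hlt
      rw [not_le] at hlt
      apply hm
      rw [phiMap_nonpos x (by omega), phiMap_nonpos x (by omega)]
  exact h.csInf_eq

theorem omegaAct_eq [TopologicalSpace A] {g : (ℤ → A) ≃ₜ (ℤ → A)} {b : A} {x x' : ℕ → A}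
    (hx' : x' ∈ OmegaA A b) (h : g (phiMap A x) = phiMap A x') : omegaAct A g x = x' := by
  funext n
  simp only [omegaAct, h, ellVal_phiMap hx', zero_add, phiMap_natCast]

theorem exists_eq_phiMap {b : A} {y : ℤ → A} (h0 : ∀ m ≤ 0, y m = b) (h1 : y 1 ≠ b) :
    (fun n : ℕ => y n) ∈ OmegaA A b ∧ y = phiMap A (fun n : ℕ => y n) := by
  have hb : y 0 = b := h0 0 le_rfl
  refine ⟨⟨by simpa using hb, by simpa [hb] using h1.symm⟩, ?_⟩
  funext m
  unfold phiMap
  split_ifs with h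
  · simp [hb, h0 m h]
  · have : ((m.toNat : ℕ) : ℤ) = m := by omega
    simp only [this]

theorem PhiPreserving.mem_Gstar [TopologicalSpace A] {g : (ℤ → A) ≃ₜ (ℤ → A)}
    (hg : PhiPreserving A g) : g ∈ Gstar A := by
  refine ⟨hg.1, fun b => Set.Subset.antisymm ?_ ?_⟩
  · rintro _ ⟨x, hx, rfl⟩
    obtain ⟨x', hx', h⟩ := (hg.2 b x hx).1
    rwa [omegaAct_eq hx' h]
  · intro x hx
    obtain ⟨x', hx', h⟩ := (hg.2 b x hx).2
    exact ⟨x', hx', omegaAct_eq hx h⟩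

theorem PhiPreserving.one [TopologicalSpace A] : PhiPreserving A (1 : (ℤ → A) ≃ₜ (ℤ → A)) :=
  ⟨Subgroup.one_mem _, fun _ x hx => ⟨⟨x, hx, rfl⟩, ⟨x, hx, rfl⟩⟩⟩

theorem PhiPreserving.mul [TopologicalSpace A] {g h : (ℤ → A) ≃ₜ (ℤ → A)}
    (hg : PhiPreserving A g) (hh : PhiPreserving A h) : PhiPreserving A (g * h) := by
  refine ⟨Subgroup.mul_mem _ hg.1 hh.1, fun b x hx => ⟨?_, ?_⟩⟩
  · obtain ⟨x', hx', e⟩ := (hh.2 b x hx).1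
    obtain ⟨x'', hx'', e'⟩ := (hg.2 b x' hx').1
    exact ⟨x'', hx'', (congrArg g e).trans e'⟩
  · obtain ⟨x', hx', e⟩ := (hg.2 b x hx).2
    obtain ⟨x'', hx'', e'⟩ := (hh.2 b x' hx').2
    exact ⟨x'', hx'', (congrArg g e').trans e⟩

theorem PhiPreserving.omegaAct_mul [TopologicalSpace A] {g h : (ℤ → A) ≃ₜ (ℤ → A)}
    (hg : PhiPreserving A g) (hh : PhiPreserving A h) {b : A} {x : ℕ → A}
    (hx : x ∈ OmegaA A b) : omegaAct A (g * h) x = omegaAct A g (omegaAct A h x) := by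
  obtain ⟨x', hx', e⟩ := (hh.2 b x hx).1
  obtain ⟨x'', hx'', e'⟩ := (hg.2 b x' hx').1
  have hgh : (g * h) (phiMap A x) = phiMap A x'' := (congrArg g e).trans e'
  rw [omegaAct_eq hx' e, omegaAct_eq hx'' e', omegaAct_eq hx'' hgh]

/-! ### Correcting one coordinate -/

/-- A swap maps `φ(Ω^b)` to itself: the left tail `b^∞` contains no occurrence, and one covering
position `1` must start there, so that `b = a` and neither word starts with `b`. -/
theorem markerSwap_phiMap {a : A} {M R : ℕ} {t : Bool → ℕ → A} (d : MarkerData a M R t)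
    {b : A} {x : ℕ → A} (hx : x ∈ OmegaA A b) :
    (∀ m ≤ 0, markerSwap a M R t (phiMap A x) m = b) ∧
      markerSwap a M R t (phiMap A x) 1 ≠ b := by
  have h := markerRel_markerSwap d (phiMap A x)
  have hpos := d.pos
  have hocc : ∀ i c, MarkerOcc a M R t (phiMap A x) i c → 1 ≤ i := by
    intro i c hc
    by_contra hlt
    have e1 := hc.1 (i - 1) (by omega) (by omega)
    have e2 := hc.ne d
    rw [phiMap_nonpos x (by omega)] at e1 e2
    exact e2 e1
  constructor
  · intro m hm
    rw [h.2 m, phiMap_nonpos x hm, hx.1]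
    rintro i c hc ⟨h1, h2⟩
    have := hocc i c hc
    omega
  · by_cases hex : ∃ c, MarkerOcc a M R t (phiMap A x) 1 c
    · obtain ⟨c, hc⟩ := hex
      have e := h.1 1 c hc 0 hpos
      simp only [Nat.cast_zero, add_zero] at e
      have e0 := hc.1 0 (by omega) (by omega)
      rw [phiMap_nonpos x le_rfl, hx.1] at e0
      rw [e, e0]
      exact d.head _
    · rw [h.2 1]
      · have h1 := phiMap_natCast x 1
        simp only [Nat.cast_one] at h1
        rw [h1, ← hx.1]
        exact hx.2.symm
      · rintro i c hc ⟨h1, h2⟩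
        have := hocc i c hc
        have hi : i = 1 := by omega
        exact hex ⟨c, hi ▸ hc⟩

theorem markerHomeo_preserving [TopologicalSpace A] [DiscreteTopology A] {a : A} {M R : ℕ}
    {t : Bool → ℕ → A} (d : MarkerData a M R t) : PhiPreserving A (markerHomeo d) := by
  constructor
  · refine Subgroup.mem_centralizer_iff.2 ?_
    rintro _ rfl
    refine Homeomorph.ext fun y => ?_
    exact (markerSwap_shift d y).symm
  · intro b x hx
    obtain ⟨h0, h1⟩ := markerSwap_phiMap d hx
    obtain ⟨hm, he⟩ := exists_eq_phiMap h0 h1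
    refine ⟨⟨_, hm, he⟩, ⟨_, hm, ?_⟩⟩
    rw [← he]
    exact markerSwap_symm d _

theorem omegaAct_markerHomeo [TopologicalSpace A] [DiscreteTopology A] {a : A} {M R : ℕ}
    {t : Bool → ℕ → A} (d : MarkerData a M R t) {b : A} {x : ℕ → A} (hx : x ∈ OmegaA A b)
    (n : ℕ) : omegaAct A (markerHomeo d) x n = markerSwap a M R t (phiMap A x) n := by
  obtain ⟨h0, h1⟩ := markerSwap_phiMap d hx
  obtain ⟨hm, he⟩ := exists_eq_phiMap h0 h1
  rw [omegaAct_eq (g := markerHomeo d) hm he]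

/-- The prefix of one point of `Ω^a` can be turned into any other, without changing the prefixes
of points of `Ω^b` for `b ≠ a`. -/
theorem exists_correction [TopologicalSpace A] [DiscreteTopology A] {a : A} {x w : ℕ → A}
    (hx : x ∈ OmegaA A a) (hw : w ∈ OmegaA A a) (N : ℕ) :
    ∃ g, PhiPreserving A g ∧ (∀ k ≤ N, omegaAct A g x k = w k) ∧
      ∀ b ≠ a, ∀ y ∈ OmegaA A b, ∀ k ≤ N, omegaAct A g y k = y k := by
  -- The target word is padded by `w 1`, so that it does not end in `a`.
  let t : Bool → ℕ → A := fun b k => if b then (if k < N then w (k + 1) else w 1) else x (k + 1)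
  have hx1 : x 1 ≠ a := fun h => hx.2 (hx.1.trans h.symm)
  have hw1 : w 1 ≠ a := fun h => hw.2 (hw.1.trans h.symm)
  have hhead : ∀ b, t b 0 ≠ a := by
    intro b
    cases b
    · simpa [t] using hx1
    · by_cases hN : 0 < N <;> simpa [t, hN] using hw1
  obtain ⟨M, R, hM, d, hR⟩ : ∃ M R : ℕ, N + 1 ≤ M ∧ MarkerData a M R t ∧
      ∀ k : ℕ, 1 + M ≤ k → k < 1 + M + R → x k = a := by
    by_cases hex : ∃ M, N + 1 ≤ M ∧ x M ≠ a
    · obtain ⟨M, hM, hxM⟩ := hex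
      refine ⟨M, 0, hM, ⟨by omega, by omega, hhead, Or.inr ?_⟩, fun k h1 h2 => by omega⟩
      have e : M - 1 + 1 = M := by omega
      have e' : ¬ (M - 1 < N) := by omega
      intro b
      cases b
      · simpa [t, e] using hxM
      · simpa [t, e'] using hw1
    · push Not at hex
      exact ⟨N + 1, N + 1, le_rfl, ⟨by omega, le_rfl, hhead, Or.inl rfl⟩,
        fun k h1 h2 => hex k (by omega)⟩
  refine ⟨markerHomeo d, markerHomeo_preserving d, fun k hk => ?_, fun b hb y hy k hk => ?_⟩
  · rw [omegaAct_markerHomeo d hx]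
    rcases Nat.eq_zero_or_pos k with rfl | hkpos
    · rw [(markerSwap_phiMap d hx).1 _ (by simp), hw.1]
    · have hocc : MarkerOcc a M R t (phiMap A x) 1 false := by
        refine ⟨fun m _ h2 => ?_, fun j hj => ?_, fun m h1 h2 => ?_⟩
        · rw [phiMap_nonpos x (by omega), hx.1]
        · have e : (1 : ℤ) + (j : ℤ) = ((j + 1 : ℕ) : ℤ) := by push_cast; ring
          rw [e, phiMap_natCast]
          simp [t]
        · have e : m = ((m.toNat : ℕ) : ℤ) := by omega
          rw [e, phiMap_natCast]
          exact hR _ (by omega) (by omega)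
      have h := (markerRel_markerSwap d (phiMap A x)).1 1 false hocc (k - 1) (by omega)
      have e : (1 : ℤ) + ((k - 1 : ℕ) : ℤ) = (k : ℤ) := by omega
      have e1 : k - 1 < N := by omega
      have e2 : k - 1 + 1 = k := by omega
      rw [e] at h
      rw [h]
      simp [t, e1, e2]
  · rw [omegaAct_markerHomeo d hy, (markerRel_markerSwap d (phiMap A y)).2, phiMap_natCast]
    -- An occurrence starting at `i ≤ k < M` would need the symbol `a` in the left tail `b^∞`.
    rintro i c hc ⟨h1, h2⟩
    have e := hc.1 (i - M) le_rfl (by omega)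
    rw [phiMap_nonpos y (by omega), hy.1] at e
    exact hb e

theorem exists_correction_finset [TopologicalSpace A] [DiscreteTopology A] (z w : ProdOmega A)
    (N : ℕ) (S : Finset A) :
    ∃ g, PhiPreserving A g ∧ ∀ a ∈ S, ∀ k ≤ N, omegaAct A g (z.1 a) k = w.1 a k := by
  classical
  induction S using Finset.induction_on with
  | empty => exact ⟨1, PhiPreserving.one, by simp⟩
  | insert a S ha ih =>
    obtain ⟨g, hg, hgS⟩ := ih
    have hmem : ∀ b, omegaAct A g (z.1 b) ∈ OmegaA A b := fun b =>
      (diagAct A g hg.mem_Gstar z).2 b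
    obtain ⟨h, hh, h1, h2⟩ := exists_correction (hmem a) (w.2 a) N
    refine ⟨h * g, hh.mul hg, fun b hb k hk => ?_⟩
    rw [hh.omegaAct_mul hg (z.2 b)]
    rcases Finset.mem_insert.1 hb with rfl | hbS
    · exact h1 k hk
    · rw [h2 b (fun e => ha (e ▸ hbS)) _ (hmem b) k hk, hgS b hbS k hk]

end Phi

/-- The diagonal action of `G*` on `∏_{a ∈ A} Ω^a` is minimal: every
`G*`-orbit is dense. -/
theorem gstar_diag_minimal
    (A : Type*) [Fintype A] [TopologicalSpace A] [DiscreteTopology A]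
    (hA : 2 ≤ Fintype.card A) :
    ∀ z : ProdOmega A,
      Dense {w : ProdOmega A |
        ∃ (g : (ℤ → A) ≃ₜ (ℤ → A)) (hg : g ∈ Gstar A), diagAct A g hg z = w} := by
  intro z w
  choose g hg hgw using fun N : ℕ => exists_correction_finset z w N Finset.univ
  refine mem_closure_of_tendsto (f := fun N => diagAct A (g N) (hg N).mem_Gstar z) (b := atTop)
    ?_ (Eventually.of_forall fun N => ⟨g N, (hg N).mem_Gstar, rfl⟩)
  refine tendsto_subtype_rng.2 (tendsto_pi_nhds.2 fun a => tendsto_pi_nhds.2 fun k => ?_)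
  refine tendsto_nhds_of_eventually_eq ?_
  filter_upwards [eventually_ge_atTop k] with N hN
  exact hgw N a (Finset.mem_univ a) k hN
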